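/- arXiv:1705.00339 — 13 statements merged into one kernel-verified Lean document; each statement's English description precedes it below -/
import Mathlib

section
/- Let K be a field, and let A be an associative unital K-algebra containing elements g, x satisfying gx − xg = g − g². Then for every natural number i, one has g^i x = x g^i + i·g^i − i·g^{i+1}, where the integer i is interpreted in K via the canonical ring map. (Lemma 2.7(1) of the paper.) -/
/-- Lemma 2.7(1): if `g * x - x * g = g - g ^ 2` in an associative unital `K`-algebra,
then `g ^ i * x = x * g ^ i + i • g ^ i - i • g ^ (i + 1)` for all natural numbers `i`. -/
theorem lemma_2_7_1 {K A : Type*} [Field K] [Ring A] [Algebra K A]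
    (g x : A) (h : g * x - x * g = g - g ^ 2) (i : ℕ) :
    g ^ i * x = x * g ^ i + (i : K) • g ^ i - (i : K) • g ^ (i + 1) := by
  have h' : g * x = x * g + g - g ^ 2 := by
    rw [add_sub_assoc, ← h]; abel
  induction i with
  | zero => simp
  | succ n ih =>
    have e : g ^ (n + 1) * x = (g * x) * g ^ n + (n : K) • g ^ (n + 1)
        - (n : K) • g ^ (n + 1 + 1) := by
      rw [pow_succ' g n, mul_assoc, ih, mul_sub, mul_add, mul_smul_comm, mul_smul_comm,
        ← pow_succ', ← pow_succ', mul_assoc]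
    have e2 : (x * g + g - g ^ 2) * g ^ n = x * g ^ (n + 1) + g ^ (n + 1) - g ^ (n + 1 + 1) := by
      rw [sub_mul, add_mul, mul_assoc, ← pow_succ', ← pow_add, add_comm 2 n]
    rw [e, h', e2, Nat.cast_succ, add_smul, add_smul, one_smul, one_smul]
    abel
end

section
/- Let K be a field of prime characteristic p, and let A be an associative unital K-algebra containing elements g, x such that g^n = 1 for some positive integer n and gx − xg = g − g². Then (g)(ad_R x)^{p−1} = g − g^p and (g)(ad_R x)^p = gx − xg. (Lemma 2.7(2) of the paper.) -/
theorem lemma_2_7_2 {K A : Type*} (p : ℕ) [Fact p.Prime] [Field K] [CharP K p]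
    [Ring A] [Algebra K A] (g x : A) (n : ℕ) (hn : 0 < n) (hgn : g ^ n = 1)
    (h : g * x - x * g = g - g ^ 2) :
    (fun b => b * x - x * b)^[p - 1] g = g - g ^ p ∧
      (fun b => b * x - x * b)^[p] g = g * x - x * g := by
  have hp : p.Prime := Fact.out
  have hp1 : p - 1 + 1 = p := Nat.sub_add_cancel hp.one_le
  obtain ⟨D, hD⟩ : ∃ D : A →ₗ[K] A, ∀ b, D b = b * x - x * b :=
    ⟨LinearMap.mulRight K x - LinearMap.mulLeft K x, fun b => by simp⟩
  have hfun : (fun b => b * x - x * b) = (D : A → A) := by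
    funext b; exact (hD b).symm
  rw [hfun]
  have leib : ∀ a b, D (a * b) = D a * b + a * D b := by
    intro a b; simp only [hD]; noncomm_ring
  have hDg : D g = g - g ^ 2 := by rw [hD, h]
  obtain ⟨u, hgu, hug⟩ : ∃ u, g * u = 1 ∧ u * g = 1 := by
    refine ⟨g ^ (n - 1), ?_, ?_⟩
    · rw [← pow_succ', Nat.sub_add_cancel hn, hgn]
    · rw [← pow_succ, Nat.sub_add_cancel hn, hgn]
  have hD1 : D 1 = 0 := by simp [hD]
  -- powers of `g`
  have hDgk : ∀ k : ℕ, D (g ^ k) = (k : K) • (g ^ k - g ^ (k + 1)) := by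
    intro k
    induction k with
    | zero => simp [hD1]
    | succ k ih =>
      rw [pow_succ, leib, ih, hDg]
      have e1 : g ^ k * (g - g ^ 2) = g ^ (k + 1) - g ^ (k + 2) := by
        rw [mul_sub, ← pow_succ, ← pow_add]
      have e2 : (g ^ k - g ^ (k + 1)) * g = g ^ (k + 1) - g ^ (k + 2) := by
        rw [sub_mul, ← pow_succ, ← pow_succ]
      rw [smul_mul_assoc, e1, e2, ← pow_succ]
      push_cast
      rw [add_smul, one_smul]
  have hDgp : D (g ^ p) = 0 := by
    rw [hDgk, CharP.cast_eq_zero K p, zero_smul]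
  -- the eigenvector `v = u - 1`
  obtain ⟨v, hv⟩ : ∃ v, v = u - 1 := ⟨_, rfl⟩
  have hDu : D u = - v := by
    have e : g * D u = - (D g * u) := by
      have := leib g u
      rw [hgu, hD1] at this
      exact eq_neg_of_add_eq_zero_right this.symm
    have e2 : D u = u * (g * D u) := by rw [← mul_assoc, hug, one_mul]
    rw [e2, e, hDg, hv, sub_mul, hgu, pow_two, mul_assoc, hgu, mul_one, mul_neg, mul_sub, hug,
      mul_one]
  have hDv : D v = - v := by
    have : D v = D u - D 1 := by rw [hv, map_sub]
    rw [this, hD1, hDu, sub_zero]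
  have hDvk : ∀ k : ℕ, D (v ^ k) = (-(k : K)) • v ^ k := by
    intro k
    induction k with
    | zero => simp [hD1]
    | succ k ih =>
      rw [pow_succ, leib, ih, hDv, smul_mul_assoc]
      push_cast
      rw [neg_add, add_smul, neg_one_smul, mul_neg]
  have hit : ∀ (j k : ℕ), (D : A → A)^[j] (v ^ k) = ((-(k : K)) ^ j) • v ^ k := by
    intro j k
    induction j with
    | zero => simp
    | succ j ih =>
      rw [Function.iterate_succ_apply', ih, map_smul, hDvk, smul_smul, pow_succ]
  have hfer : ∀ k : ℕ, k ≠ 0 → k < p → (-(k : K)) ^ (p - 1) = 1 := by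
    intro k hk0 hkp
    have hz : (-(k : ZMod p)) ≠ 0 := by
      rw [neg_ne_zero, Ne, ZMod.natCast_eq_zero_iff]
      exact fun hd => hk0 (Nat.eq_zero_of_dvd_of_lt hd hkp)
    have := congrArg (ZMod.castHom (dvd_refl p) K) (ZMod.pow_card_sub_one_eq_one hz)
    simpa only [map_pow, map_neg, map_natCast, map_one] using this
  have hup : (D : A → A)^[p - 1] (u ^ (p - 1)) = u ^ (p - 1) - 1 := by
    have hu : u = v + 1 := by rw [hv, sub_add_cancel]
    have hex : u ^ (p - 1) = ∑ m ∈ Finset.range p, ((p - 1).choose m : K) • v ^ m := by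
      rw [hu, (Commute.one_right v).add_pow, hp1]
      refine Finset.sum_congr rfl fun m _ => ?_
      rw [one_pow, mul_one, Nat.cast_smul_eq_nsmul, nsmul_eq_mul, Nat.cast_comm]
    have hpow : ∀ b, (D : A → A)^[p - 1] b = (D ^ (p - 1)) b := fun b => by
      rw [Module.End.pow_apply]
    rw [hpow, hex, map_sum, ← hp1, Finset.sum_range_succ', Finset.sum_range_succ', hp1]
    have h0 : p - 1 ≠ 0 := by have := hp.two_le; omega
    have hz : (D ^ (p - 1)) (((p - 1).choose 0 : K) • v ^ 0) = 0 := by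
      rw [map_smul, ← hpow, hit]; simp [h0]
    rw [hz]
    simp only [Nat.choose_zero_right, Nat.cast_one, pow_zero, one_smul, add_sub_cancel_right,
      add_zero]
    refine Finset.sum_congr rfl fun m hm => ?_
    have hm' := Finset.mem_range.1 hm
    rw [map_smul, ← hpow, hit, hfer _ (Nat.succ_ne_zero m) (by omega), one_smul]
  have hconst : ∀ (j : ℕ) (b : A), (D : A → A)^[j] (g ^ p * b) = g ^ p * (D : A → A)^[j] b := by
    intro j b
    induction j with
    | zero => rfl
    | succ j ih =>
      rw [Function.iterate_succ_apply', ih, leib, hDgp, zero_mul, zero_add,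
        Function.iterate_succ_apply']
  have hg : g = g ^ p * u ^ (p - 1) := by
    have hc : Commute g u := by rw [Commute, SemiconjBy, hgu, hug]
    have : g ^ (p - 1) * u ^ (p - 1) = 1 := by rw [← hc.mul_pow, hgu, one_pow]
    have e : g ^ p = g * g ^ (p - 1) := by rw [← pow_succ', hp1]
    rw [e, mul_assoc, this, mul_one]
  have first : (D : A → A)^[p - 1] g = g - g ^ p := by
    have : (D : A → A)^[p - 1] g = g ^ p * (u ^ (p - 1) - 1) := by
      rw [← hup, ← hconst, ← hg]
    rw [this, mul_sub, ← hg, mul_one]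
  refine ⟨first, ?_⟩
  have : (D : A → A)^[p] g = D ((D : A → A)^[p - 1] g) := by
    rw [← Function.iterate_succ_apply' (D : A → A), Nat.succ_eq_add_one, hp1]
  rw [this, first, map_sub, hDgp, sub_zero, hD]
end

section
/- Let K be a field of prime characteristic p, and let A be an associative unital K-algebra containing elements g, x such that g^n = 1 for some positive integer n and gx − xg = g − g². Then (ad_L x)^{p−1}(g) = g − g^p and [x^p, g] = [x, g]. (Lemma 2.7(3) of the paper.) -/
theorem aux_main {K A : Type*} (p : ℕ) [hp : Fact p.Prime] [Field K] [CharP K p]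
    [Ring A] [Algebra K A] [CharP A p] [CharP (Module.End K A) p] (g u x : A)
    (hgu : g * u = 1) (hug : u * g = 1)
    (h : g * x - x * g = g - g ^ 2) (D : Module.End K A)
    (hD : ∀ b, D b = x * b - b * x) :
    (D ^ (p - 1)) g = g - g ^ p := by
  have leib : ∀ a b, D (a * b) = D a * b + a * D b := by
    intro a b; simp only [hD]; noncomm_ring
  have hDg : D g = g ^ 2 - g := by
    rw [hD, ← neg_sub, h, neg_sub]
  have hD1 : D 1 = 0 := by simp [hD]
  have hDu : D u = u - 1 := by
    have h1 := leib g u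
    rw [hgu, hD1, hDg] at h1
    have h2 : u * (g * D u) = D u := by rw [← mul_assoc, hug, one_mul]
    have h3 : g * D u = 1 - g := by
      have : (g ^ 2 - g) * u = g - 1 := by
        rw [sub_mul, pow_two, mul_assoc, hgu, mul_one]
      rw [this] at h1
      have h5 := eq_neg_of_add_eq_zero_right h1.symm
      rw [h5, neg_sub]
    rw [← h2, h3, mul_sub, hug, mul_one]
  have hgk : ∀ k : ℕ, D (g ^ k) = k * (g ^ (k + 1) - g ^ k) := by
    intro k
    induction k with
    | zero => simp [hD1]
    | succ k ih =>
      rw [pow_succ, leib, ih, hDg]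
      push_cast
      simp only [mul_assoc, sub_mul, mul_sub, add_mul, one_mul, ← pow_succ, ← pow_add]
      abel
  have hgp : D (g ^ p) = 0 := by rw [hgk]; simp
  obtain ⟨w, hw⟩ : ∃ w, w = 1 - u := ⟨_, rfl⟩
  have hDw : D w = w := by rw [hw, map_sub, hD1, hDu]; abel
  have hwk : ∀ k : ℕ, D (w ^ k) = k * w ^ k := by
    intro k
    induction k with
    | zero => simp [hD1]
    | succ k ih =>
      rw [pow_succ, leib, ih, hDw]
      push_cast
      simp only [mul_assoc, add_mul, one_mul]
  have hmk : ∀ m k : ℕ, (D ^ m) (g ^ p * w ^ k) = ((k ^ m : ℕ) : A) * (g ^ p * w ^ k) := by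
    intro m k
    induction m with
    | zero => simp
    | succ m ih =>
      rw [pow_succ', Module.End.mul_apply, ih, ← nsmul_eq_mul, map_nsmul, leib, hgp, hwk,
        zero_mul, zero_add, ← nsmul_eq_mul, mul_smul_comm, ← mul_nsmul', ← nsmul_eq_mul, pow_succ]
  have hu : u = 1 - w := by rw [hw]; abel
  have hgup : g ^ p * u ^ p = 1 := by
    rw [← (show Commute g u from hgu.trans hug.symm).mul_pow, hgu, one_pow]
  have hgeom : g = ∑ k ∈ Finset.range p, g ^ p * w ^ k := by
    have h1 : (∑ k ∈ Finset.range p, w ^ k) * u = u ^ p := by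
      rw [hu, geom_sum_mul_neg, sub_pow_char_of_commute _ (Commute.one_left w), one_pow]
    rw [← Finset.mul_sum]
    calc g = g ^ p * ((∑ k ∈ Finset.range p, w ^ k) * u) * g := by rw [h1, hgup, one_mul]
      _ = _ := by rw [mul_assoc, mul_assoc, hug, mul_one]
  obtain ⟨q, hq⟩ : ∃ q, p = q + 1 := ⟨p - 1, by have := hp.out.pos; omega⟩
  have hq0 : p - 1 ≠ 0 := by have := hp.out.two_le; omega
  have key : (D ^ (p - 1)) g + g ^ p = g := by
    have e1 : (D ^ (p - 1)) g = ∑ k ∈ Finset.range p, (D ^ (p - 1)) (g ^ p * w ^ k) := by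
      conv_lhs => rw [hgeom]
      rw [map_sum]
    have e2 : ∀ k ∈ Finset.range p, (D ^ (p - 1)) (g ^ p * w ^ k) + (if k = 0 then g ^ p else 0)
        = g ^ p * w ^ k := by
      intro k hk
      rw [hmk]
      by_cases hk0 : k = 0
      · simp [hk0, hq0]
      · have : ((k ^ (p - 1) : ℕ) : A) = ((1 : ℕ) : A) := by
          rw [CharP.natCast_eq_natCast A p]
          have hc : IsCoprime (k : ℤ) p := by
            rw [Nat.isCoprime_iff_coprime]
            exact (Nat.coprime_of_lt_prime hk0 (Finset.mem_range.1 hk) hp.out).symm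
          have := Int.ModEq.pow_card_sub_one_eq_one hp.out hc
          exact_mod_cast this
        rw [this]; simp [hk0]
    have e3 := Finset.sum_congr rfl e2
    rw [Finset.sum_add_distrib, ← e1, ← hgeom, Finset.sum_ite_eq', if_pos] at e3
    · exact e3
    · exact Finset.mem_range.2 hp.out.pos
  exact eq_sub_of_add_eq key

/-- Lemma 2.7(3): in characteristic `p`, if `g ^ n = 1` for some `n > 0` and
`g * x - x * g = g - g ^ 2`, then `(ad_L x)^(p-1)(g) = g - g ^ p` and
`[x ^ p, g] = [x, g]`. -/
theorem lemma_2_7_3 {K A : Type*} (p : ℕ) [Fact p.Prime] [Field K] [CharP K p]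
    [Ring A] [Algebra K A] (g x : A) (n : ℕ) (hn : 0 < n) (hgn : g ^ n = 1)
    (h : g * x - x * g = g - g ^ 2) :
    (fun b => x * b - b * x)^[p - 1] g = g - g ^ p ∧
      x ^ p * g - g * x ^ p = x * g - g * x := by
  rcases subsingleton_or_nontrivial A with hA | hA
  · exact ⟨Subsingleton.elim _ _, Subsingleton.elim _ _⟩
  have : CharP A p := charP_of_injective_algebraMap (algebraMap K A).injective p
  have : CharP (Module.End K A) p :=
    charP_of_injective_algebraMap (algebraMap K (Module.End K A)).injective p
  obtain ⟨m, rfl⟩ : ∃ m, n = m + 1 := ⟨n - 1, by omega⟩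
  let D : Module.End K A := LinearMap.mulLeft K x - LinearMap.mulRight K x
  have hD : ∀ b, D b = x * b - b * x := fun b => by simp [D]
  have h1 := aux_main p g (g ^ m) x (by rw [← pow_succ', hgn]) (by rw [← pow_succ, hgn]) h D hD
  have hf : (fun b => x * b - b * x) = ⇑D := funext fun b => (hD b).symm
  refine ⟨by rw [hf, ← Module.End.pow_apply, h1], ?_⟩
  have hpos := (Fact.out : p.Prime).pos
  have hDp : D ^ p = LinearMap.mulLeft K (x ^ p) - LinearMap.mulRight K (x ^ p) := by
    rw [← LinearMap.pow_mulLeft, ← LinearMap.pow_mulRight]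
    exact sub_pow_char_of_commute _ (LinearMap.commute_mulLeft_right x x)
  have h2 : (D ^ p) g = x ^ p * g - g * x ^ p := by rw [hDp]; simp
  have h3 : (D ^ p) g = D (g - g ^ p) := by
    conv_lhs => rw [← Nat.sub_add_cancel hpos, pow_succ', Module.End.mul_apply, h1]
  have leib : ∀ a b, D (a * b) = D a * b + a * D b := by
    intro a b; simp only [hD]; noncomm_ring
  have hcomm : Commute g (D g) := by
    rw [hD, ← neg_sub, h, neg_sub]
    exact ((Commute.refl g).pow_right 2).sub_right (Commute.refl g)
  have hgk : ∀ k : ℕ, D (g ^ (k + 1)) = ((k + 1 : ℕ) : A) * (g ^ k * D g) := by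
    intro k
    induction k with
    | zero => simp
    | succ k ih =>
      rw [pow_succ, leib, ih, mul_assoc, mul_assoc, ← hcomm.eq, ← mul_assoc (g ^ k), ← pow_succ]
      push_cast
      simp only [add_mul, one_mul]
  have hgp : D (g ^ p) = 0 := by
    have := hgk (p - 1)
    rw [Nat.sub_add_cancel hpos] at this
    simpa using this
  rw [← h2, h3, map_sub, hgp, sub_zero, hD]
end

section
/- Let K be a field of prime characteristic p and H a bialgebra over K. Let g ∈ H be a grouplike element with g^n = 1 for some positive integer n, and let x ∈ H satisfy Δ(x) = x ⊗ 1 + g ⊗ x and gx − xg = g − g². Then Δ(x^p − x) = (x^p − x) ⊗ 1 + g^p ⊗ (x^p − x); that is, x^p − x is (1, g^p)-skew-primitive. (Final claim of Lemma 2.7 of the paper.) -/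
open scoped TensorProduct

section Aux
open Polynomial

theorem aux_prod (p : ℕ) [Fact p.Prime] :
    ∏ k ∈ Finset.range (p - 1), (X + C (((k + 1 : ℕ) : ZMod p))) = (X : (ZMod p)[X]) ^ (p - 1) - 1 := by
  have hp : p.Prime := Fact.out
  have hp1 : p - 1 + 1 = p := Nat.sub_add_cancel hp.one_lt.le
  have hmon : (∏ k ∈ Finset.range p, (X + C ((k : ℕ) : ZMod p))).Monic :=
    monic_prod_of_monic _ _ (fun k _ => monic_X_add_C _)
  have hdeg : (∏ k ∈ Finset.range p, (X + C ((k : ℕ) : ZMod p))).degree = (p : WithBot ℕ) := by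
    rw [degree_prod, Finset.sum_congr rfl (fun k _ => degree_X_add_C _)]; simp
  have hmon2 : ((X : (ZMod p)[X]) ^ p - X).Monic :=
    monic_X_pow_sub (by rw [degree_X]; exact_mod_cast hp.one_lt)
  have hdeg2 : ((X : (ZMod p)[X]) ^ p - X).degree = (p : WithBot ℕ) := by
    rw [degree_sub_eq_left_of_degree_lt] <;> simp [hp.one_lt]
  have key : ∏ k ∈ Finset.range p, (X + C ((k : ℕ) : ZMod p)) = (X : (ZMod p)[X]) ^ p - X := by
    refine eq_of_degree_le_of_eval_finset_eq (Finset.univ) ?_ ?_ ?_ ?_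
    · rw [hdeg]; simp [ZMod.card]
    · rw [hdeg, hdeg2]
    · rw [hmon, hmon2]
    · intro a _
      have : (X ^ p - X : (ZMod p)[X]).eval a = 0 := by simp [ZMod.pow_card]
      rw [this, eval_prod]
      refine Finset.prod_eq_zero (i := (-a).val) (Finset.mem_range.2 (ZMod.val_lt _)) ?_
      simp
  have hr := Finset.prod_range_succ' (fun k : ℕ => (X + C ((k : ℕ) : ZMod p))) (p - 1)
  rw [congrArg Finset.range hp1] at hr
  rw [hr] at key
  apply mul_right_cancel₀ (X_ne_zero (R := ZMod p))
  rw [sub_mul, ← pow_succ, hp1, one_mul, ← key]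
  simp

theorem aux_choose (p : ℕ) [Fact p.Prime] {A : Type*} [Ring A] (hA : (p : A) = 0) (i : ℕ)
    (hi : i < p) : (((p - 1).choose i : ℕ) : A) = (-1) ^ i := by
  have hp : p.Prime := Fact.out
  have hp1 : p - 1 + 1 = p := Nat.sub_add_cancel hp.one_lt.le
  induction i with
  | zero => simp
  | succ i ih =>
    have h1 := Nat.choose_succ_succ (p - 1) i
    rw [Nat.succ_eq_add_one, hp1] at h1
    obtain ⟨c, hc⟩ := hp.dvd_choose_self (Nat.succ_ne_zero i) hi
    rw [hc] at h1
    have h2 := congrArg (Nat.cast : ℕ → A) h1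
    push_cast at h2
    rw [hA, zero_mul, ih (by omega)] at h2
    rw [pow_succ, mul_neg_one]
    exact (neg_eq_of_add_eq_zero_right h2.symm).symm

theorem aux_sub_pow (p : ℕ) [Fact p.Prime] {A : Type*} [Ring A] (hA : (p : A) = 0) (a b : A)
    (h : Commute a b) :
    (a - b) ^ (p - 1) = ∑ i ∈ Finset.range p, a ^ i * b ^ (p - 1 - i) := by
  have hp : p.Prime := Fact.out
  have hp1 : p - 1 + 1 = p := Nat.sub_add_cancel hp.one_lt.le
  have h1 : ((-1 : A)) ^ (p - 1) = 1 := by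
    have := aux_choose p hA (p - 1) (by omega)
    simpa using this.symm
  rw [sub_eq_add_neg, (h.neg_right).add_pow, hp1]
  refine Finset.sum_congr rfl fun i hi => ?_
  have hi' : i < p := Finset.mem_range.1 hi
  rw [aux_choose p hA i hi', neg_pow b, mul_assoc, mul_assoc]
  congr 1
  have hc : Commute (b ^ (p - 1 - i)) ((-1 : A) ^ i) := ((Commute.one_right _).neg_right).pow_right _
  rw [hc.eq, ← mul_assoc, ← pow_add, Nat.sub_add_cancel (by omega), h1, one_mul]

theorem aux_ad (p : ℕ) [Fact p.Prime] {A : Type*} [Ring A] [Algebra (ZMod p) A] (w c : A)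
    (h : w * c - c * w = c ^ 2 - c) :
    ∑ i ∈ Finset.range p, w ^ i * c * w ^ (p - 1 - i) = c - c ^ p := by
  have hp : p.Prime := Fact.out
  have hp1 : p - 1 + 1 = p := Nat.sub_add_cancel hp.one_lt.le
  set D : Module.End (ZMod p) A := LinearMap.mulLeft (ZMod p) w - LinearMap.mulRight (ZMod p) w
    with hD
  have hDa : ∀ y, D y = w * y - y * w := fun y => by simp [hD]
  have hE : ((p : ℕ) : Module.End (ZMod p) A) = 0 := by
    have := map_natCast (algebraMap (ZMod p) (Module.End (ZMod p) A)) p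
    rw [← this]; simp
  have h1 : (D ^ (p - 1)) c = ∑ i ∈ Finset.range p, w ^ i * c * w ^ (p - 1 - i) := by
    rw [hD, aux_sub_pow p hE _ _ (LinearMap.commute_mulLeft_right _ _)]
    simp [LinearMap.sum_apply, LinearMap.pow_mulLeft, LinearMap.pow_mulRight, mul_assoc]
  have hDk : ∀ k : ℕ, D (c ^ k) = (k : A) * (c ^ (k + 1) - c ^ k) := by
    intro k
    induction k with
    | zero => simp [hDa]
    | succ k ih =>
      have e : D (c ^ (k + 1)) = D (c ^ k) * c + c ^ k * (w * c - c * w) := by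
        simp only [hDa, pow_succ]; noncomm_ring
      rw [e, ih, h]; push_cast; simp only [pow_succ, pow_zero, one_mul]; noncomm_ring
  have hprod : ∀ m : ℕ, (aeval D (∏ k ∈ Finset.range m, (X + C (((k + 1 : ℕ) : ZMod p))))) c
      = (m.factorial : A) * c ^ (m + 1) := by
    intro m
    induction m with
    | zero => simp
    | succ m ih =>
      have e : ∀ z : A, D ((m.factorial : A) * z) = (m.factorial : A) * D z := by
        intro z
        rw [← nsmul_eq_mul, map_nsmul, nsmul_eq_mul]
      rw [Finset.prod_range_succ, mul_comm, map_mul, Module.End.mul_apply, ih, map_add, aeval_X,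
        aeval_C, LinearMap.add_apply, e, hDk, map_natCast, Module.End.natCast_apply, nsmul_eq_mul,
        Nat.factorial_succ]
      rw [← mul_assoc ((m + 1 : ℕ) : A), ← Nat.cast_mul, mul_comm (m + 1), ← mul_assoc,
        ← Nat.cast_mul, ← mul_add, sub_add_cancel]
  have h2 := hprod (p - 1)
  have hw : (((p - 1).factorial : ℕ) : A) = -1 := by
    have := congrArg (algebraMap (ZMod p) A) (ZMod.wilsons_lemma p)
    rwa [map_natCast, map_neg, map_one] at this
  rw [aux_prod, hw, hp1] at h2
  simp only [map_sub, map_pow, aeval_X, map_one, LinearMap.sub_apply, Module.End.one_apply, h1] at h2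
  rw [sub_eq_iff_eq_add] at h2
  rw [h2]; noncomm_ring

theorem aux_deriv {A : Type*} [Ring A] (w : A[X]) (n : ℕ) :
    derivative (w ^ n) = ∑ i ∈ Finset.range n, w ^ i * derivative w * w ^ (n - 1 - i) := by
  induction n with
  | zero => simp
  | succ n ih =>
    rw [pow_succ, derivative_mul, ih, Finset.sum_range_succ, Finset.sum_mul]
    congr 1
    · refine Finset.sum_congr rfl fun i hi => ?_
      have hi' : i < n := Finset.mem_range.1 hi
      rw [mul_assoc, ← pow_succ]
      congr 2; omega
    · simp

theorem aux_main_s3 (p : ℕ) [Fact p.Prime] {A : Type*} [Ring A] [Algebra (ZMod p) A] (g x : A)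
    (h : g * x - x * g = g - g ^ 2) :
    (C x + C g * X : A[X]) ^ p = C (x ^ p) + C (g - g ^ p) * X + C (g ^ p) * X ^ p := by
  have hp : p.Prime := Fact.out
  set w : A[X] := C x + C g * X with hw
  have hdw : derivative w = C g := by simp [hw]
  have hcom : w * C g - C g * w = (C g) ^ 2 - C g := by
    have e : w * C g - C g * w = C (x * g - g * x) := by
      rw [hw, add_mul, mul_add, mul_assoc, X_mul_C]
      simp only [map_sub, map_mul]
      abel
    rw [e, ← neg_sub, h]; simp
  have hd : derivative (w ^ p) = C (g - g ^ p) := by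
    rw [aux_deriv, hdw, aux_ad p w (C g) hcom]; simp
  have hdeg : w.natDegree ≤ 1 := by
    rw [hw]; compute_degree
  have hw1 : w.coeff 1 = g := by simp [hw, coeff_C]
  have hco : ∀ (a b c : A) (k : ℕ), (C a + C b * X + C c * X ^ p : A[X]).coeff k =
      (if k = 0 then a else 0) + (if k = 1 then b else 0) + (if k = p then c else 0) := by
    intro a b c k
    rw [coeff_add, coeff_add, coeff_C, coeff_C_mul, coeff_C_mul, coeff_X, coeff_X_pow]
    simp [eq_comm]
  ext k
  rw [hco]
  rcases Nat.eq_zero_or_pos k with rfl | hk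
  · have : (w ^ p).coeff 0 = x ^ p := by
      have : ∀ n, (w ^ n).coeff 0 = x ^ n := by
        intro n
        induction n with
        | zero => simp
        | succ n ih => rw [pow_succ, mul_coeff_zero, ih, pow_succ]; simp [hw]
      exact this p
    rw [this]; simp [hp.ne_zero.symm]
  · rcases lt_trichotomy k p with hkp | rfl | hkp
    · obtain ⟨j, rfl⟩ : ∃ j, k = j + 1 := ⟨k - 1, by omega⟩
      have hc := congrArg (fun q => coeff q j) hd
      simp only [coeff_derivative] at hc
      rcases Nat.eq_zero_or_pos j with rfl | hj
      · rw [coeff_C_zero] at hc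
        simpa [hp.one_lt.ne] using hc
      · rw [coeff_C_of_ne_zero hj.ne'] at hc
        rw [if_neg (by omega), if_neg (by omega), if_neg (by omega), add_zero, add_zero]
        have hne : ((j + 1 : ℕ) : ZMod p) ≠ 0 := by
          rw [Ne, ZMod.natCast_eq_zero_iff]
          exact Nat.not_dvd_of_pos_of_lt (Nat.succ_pos _) hkp
        have e : ((j : A) + 1) * algebraMap (ZMod p) A ((j + 1 : ℕ) : ZMod p)⁻¹ = 1 := by
          have := congrArg (algebraMap (ZMod p) A) (mul_inv_cancel₀ hne)
          simpa [map_mul, -map_inv₀] using this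
        calc (w ^ p).coeff (j + 1) = (w ^ p).coeff (j + 1) * (((j : A) + 1) *
              algebraMap (ZMod p) A ((j + 1 : ℕ) : ZMod p)⁻¹) := by rw [e, mul_one]
          _ = 0 := by rw [← mul_assoc, hc, zero_mul]
    · have := coeff_pow_of_natDegree_le (m := k) hdeg
      rw [mul_one, hw1] at this
      rw [this]
      have h1 : (1 : ℕ) ≠ k := hp.one_lt.ne
      simp [h1.symm, hp.ne_zero]
    · have h0 : (w ^ p).coeff k = 0 := by
        apply coeff_eq_zero_of_natDegree_lt
        have := natDegree_pow_le_of_le p hdeg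
        omega
      have h1 : (1 : ℕ) ≠ k := (hp.one_lt.trans hkp).ne
      rw [h0]
      simp [h1.symm, hk.ne', hkp.ne']
end Aux

/-- Final claim of Lemma 2.7: if `g` is grouplike with `g ^ n = 1`, `x` is
`(1, g)`-skew-primitive and `g * x - x * g = g - g ^ 2`, then `x ^ p - x` is
`(1, g ^ p)`-skew-primitive. -/
theorem lemma_2_7_last {K H : Type*} (p : ℕ) [Fact p.Prime] [Field K] [CharP K p]
    [Ring H] [Bialgebra K H] (g x : H) (n : ℕ) (hn : 0 < n) (hgn : g ^ n = 1)
    (hgc : Coalgebra.comul (R := K) g = g ⊗ₜ[K] g)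
    (hge : Coalgebra.counit (R := K) g = 1)
    (hxc : Coalgebra.comul (R := K) x = x ⊗ₜ[K] (1 : H) + g ⊗ₜ[K] x)
    (hcomm : g * x - x * g = g - g ^ 2) :
    Coalgebra.comul (R := K) (x ^ p - x) =
      (x ^ p - x) ⊗ₜ[K] (1 : H) + (g ^ p) ⊗ₜ[K] (x ^ p - x) := by
  letI : CharP H p := by
    haveI : Nontrivial H := by
      refine ⟨⟨0, g, fun h => ?_⟩⟩
      rw [← h, map_zero] at hge
      exact zero_ne_one hge
    exact charP_of_injective_algebraMap (algebraMap K H).injective p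
  letI : Algebra (ZMod p) H := ZMod.algebra H p
  have hmain := aux_main_s3 p g x hcomm
  let f : H →+* H ⊗[K] H := (Algebra.TensorProduct.includeLeft : H →ₐ[K] H ⊗[K] H).toRingHom
  have hf : ∀ a, f a = a ⊗ₜ[K] (1 : H) := fun a => rfl
  have hcm : ∀ a, Commute (f a) ((1 : H) ⊗ₜ[K] x) := by
    intro a
    rw [hf, Commute, SemiconjBy]
    simp [Algebra.TensorProduct.tmul_mul_tmul]
  let F := Polynomial.eval₂RingHom' f ((1 : H) ⊗ₜ[K] x) hcm
  have hFC : ∀ a, F (Polynomial.C a) = a ⊗ₜ[K] (1 : H) := fun a =>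
    (Polynomial.eval₂_C f _).trans (hf a)
  have hFX : F Polynomial.X = (1 : H) ⊗ₜ[K] x := Polynomial.eval₂_X f _
  have h2 := congrArg F hmain
  simp only [map_add, map_mul, map_pow F, hFC, hFX, Algebra.TensorProduct.tmul_mul_tmul,
    Algebra.TensorProduct.tmul_pow, one_pow, one_mul, mul_one] at h2
  have h3 : Coalgebra.comul (R := K) (x ^ p) = (Coalgebra.comul (R := K) x) ^ p :=
    Bialgebra.comul_pow x p
  rw [map_sub, h3, hxc, h2]
  simp only [TensorProduct.sub_tmul, TensorProduct.tmul_sub]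
  abel
end

section
/- Let K be a field of prime characteristic p, and let A be an associative unital K-algebra with elements g, x, y and scalars λ₁, λ₂ ∈ {0, 1} ⊆ K, λ₃ ∈ K, satisfying: g^m = 1 for some positive integer m, gx − xg = λ₁(g − g²), gy − yg = λ₂(g − g²), and xy − yx + λ₁y − λ₂x = λ₃(1 − g²). Then for every integer n ≥ 2, (ad_L x)^n(y) = (−λ₁)^{n−1}·(ad_L x)(y) − λ₃·Σ_{i=0}^{n−2} (−λ₁)^i·(ad_L x)^{n−1−i}(g²). In particular, (ad_L x)^p(y) = (−λ₁)^{p−1}·(ad_L x)(y). (Lemma 2.8(2) of the paper.) -/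
/-- The `p`-th power of `ad x` is `ad (x ^ p)` in characteristic `p`. -/
theorem aux_ad_pow {K A : Type*} (p : ℕ) [Fact p.Prime] [Field K] [CharP K p]
    [Ring A] [Algebra K A] (x b : A) :
    ((LinearMap.mulLeft K x - LinearMap.mulRight K x) ^ p) b = x ^ p * b - b * x ^ p := by
  rcases subsingleton_or_nontrivial A with h | h
  · exact Subsingleton.elim _ _
  · have : CharP (Module.End K A) p :=
      charP_of_injective_algebraMap (algebraMap K (Module.End K A)).injective p
    rw [sub_pow_char_of_commute p (LinearMap.commute_mulLeft_right x x),
      LinearMap.pow_mulLeft, LinearMap.pow_mulRight]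
    simp

/-- Main step: `(ad x)^p g = (ad x) g` when `(ad x) g = g ^ 2 - g` and `g` is invertible. -/
theorem aux_ad_pow_g {K A : Type*} (p : ℕ) [Fact p.Prime] [Field K] [CharP K p]
    [Ring A] [Algebra K A] (g u x : A) (hgu : g * u = 1) (hug : u * g = 1)
    (hgx : x * g - g * x = g ^ 2 - g) :
    ((LinearMap.mulLeft K x - LinearMap.mulRight K x) ^ p) g = x * g - g * x := by
  have hu : x * u - u * x = u - 1 := by
    have e : u * (x * g - g * x) * u = u * (g ^ 2 - g) * u := by rw [hgx]
    have e1 : u * (x * g - g * x) * u = u * x * (g * u) - (u * g) * x * u := by noncomm_ring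
    have e2 : u * (g ^ 2 - g) * u = (u * g) * (g * u) - (u * g) * u := by noncomm_ring
    rw [e1, e2, hgu, hug] at e
    simp only [mul_one, one_mul] at e
    rw [← neg_sub (u * x), e, neg_sub]
  have hk : ∀ k : ℕ, ((LinearMap.mulLeft K x - LinearMap.mulRight K x) ^ (k + 1)) u = u - 1 := by
    intro k
    induction k with
    | zero => simpa using hu
    | succ k ih =>
      rw [pow_succ', Module.End.mul_apply, ih]
      simp only [LinearMap.sub_apply, LinearMap.mulLeft_apply, LinearMap.mulRight_apply]
      rw [← hu]
      rw [hu]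
      rw [mul_sub, sub_mul, mul_one, one_mul, sub_sub_sub_cancel_right, hu]
  have hp := hk (p - 1)
  rw [Nat.sub_add_cancel (Fact.out : p.Prime).one_le, aux_ad_pow, ← hu] at hp
  rw [aux_ad_pow]
  have hz : (x ^ p - x) * u = u * (x ^ p - x) := by
    rw [sub_mul, mul_sub, sub_eq_sub_iff_sub_eq_sub]; exact hp
  have hz2 : (x ^ p - x) * g = g * (x ^ p - x) := by
    calc (x ^ p - x) * g = g * (u * (x ^ p - x)) * g := by rw [← mul_assoc, hgu, one_mul]
      _ = g * (x ^ p - x) * (u * g) := by rw [← hz]; noncomm_ring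
      _ = _ := by rw [hug, mul_one]
  rw [sub_mul, mul_sub, sub_eq_sub_iff_sub_eq_sub] at hz2
  exact hz2

/-- Lemma 2.8(2): with `g ^ m = 1`, `g * x - x * g = λ₁ • (g - g²)`,
`g * y - y * g = λ₂ • (g - g²)` and `x * y - y * x + λ₁ • y - λ₂ • x = λ₃ • (1 - g²)`
(where `λ₁, λ₂ ∈ {0,1}`), for every `n ≥ 2` one has
`(ad_L x)^n(y) = (-λ₁)^(n-1) • (ad_L x)(y) - λ₃ • ∑_{i=0}^{n-2} (-λ₁)^i • (ad_L x)^(n-1-i)(g²)`;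
in particular `(ad_L x)^p(y) = (-λ₁)^(p-1) • (ad_L x)(y)`. -/
theorem lemma_2_8_2 {K A : Type*} (p : ℕ) [Fact p.Prime] [Field K] [CharP K p]
    [Ring A] [Algebra K A] (g x y : A) (lam1 lam2 lam3 : K)
    (h1 : lam1 = 0 ∨ lam1 = 1) (h2 : lam2 = 0 ∨ lam2 = 1)
    (m : ℕ) (hm : 0 < m) (hgm : g ^ m = 1)
    (hgx : g * x - x * g = lam1 • (g - g ^ 2))
    (hgy : g * y - y * g = lam2 • (g - g ^ 2))
    (hxy : x * y - y * x + lam1 • y - lam2 • x = lam3 • ((1 : A) - g ^ 2)) :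
    (∀ n : ℕ, 2 ≤ n →
      (fun b => x * b - b * x)^[n] y =
        (-lam1) ^ (n - 1) • (x * y - y * x) -
          lam3 • ∑ i ∈ Finset.range (n - 1),
            (-lam1) ^ i • (fun b => x * b - b * x)^[n - 1 - i] (g ^ 2)) ∧
    (fun b => x * b - b * x)^[p] y = (-lam1) ^ (p - 1) • (x * y - y * x) := by
  have hD : ∀ (n : ℕ) (b : A), (fun b => x * b - b * x)^[n] b =
      ((LinearMap.mulLeft K x - LinearMap.mulRight K x) ^ n) b := by
    intro n b
    rw [Module.End.pow_apply]
    rfl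
  have hD1 : ∀ b : A, x * b - b * x = (LinearMap.mulLeft K x - LinearMap.mulRight K x) b :=
    fun b => rfl
  have hDx : (LinearMap.mulLeft K x - LinearMap.mulRight K x) x = 0 := by simp
  have hDone : (LinearMap.mulLeft K x - LinearMap.mulRight K x) (1 : A) = 0 := by simp
  have hpg : lam1 = 1 → ((LinearMap.mulLeft K x - LinearMap.mulRight K x) ^ p) g =
      x * g - g * x := by
    intro h
    obtain ⟨k, rfl⟩ : ∃ k, m = k + 1 := ⟨m - 1, by omega⟩
    refine aux_ad_pow_g p g (g ^ k) x (by rw [← pow_succ', hgm]) (by rw [← pow_succ, hgm]) ?_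
    rw [h, one_smul] at hgx
    rw [← neg_sub, hgx, neg_sub]
  have hxg : (LinearMap.mulLeft K x - LinearMap.mulRight K x) g = lam1 • (g ^ 2 - g) := by
    rw [← hD1, ← neg_sub, hgx, ← smul_neg, neg_sub]
  have hg2 : lam1 = 0 → (LinearMap.mulLeft K x - LinearMap.mulRight K x) (g ^ 2) = 0 := by
    intro h
    rw [h, zero_smul, sub_eq_zero] at hgx
    rw [← hD1, sub_eq_zero]
    exact ((show Commute g x from hgx).pow_left 2).symm
  simp only [hD]
  rw [hD1] at hpg hxy ⊢
  generalize LinearMap.mulLeft K x - LinearMap.mulRight K x = D at *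
  have hyy : D y = -lam1 • y + lam2 • x + lam3 • ((1 : A) - g ^ 2) := by
    rw [← hxy, neg_smul]; abel
  have hDD : D (D y) = -lam1 • D y - lam3 • D (g ^ 2) := by
    conv_lhs => rw [hyy]
    simp only [map_add, map_sub, map_smul, hDx, hDone, smul_zero, zero_sub, smul_neg]
    abel
  have key : ∀ n : ℕ, (D ^ (n + 1)) y = (-lam1) ^ n • D y -
      lam3 • ∑ i ∈ Finset.range n, (-lam1) ^ i • (D ^ (n - i)) (g ^ 2) := by
    intro n
    induction n with
    | zero => simp
    | succ n ih =>
      rw [pow_succ', Module.End.mul_apply, ih, Finset.sum_range_succ]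
      simp only [map_sub, map_smul, map_sum, hDD]
      have : ∑ i ∈ Finset.range n, (-lam1) ^ i • D ((D ^ (n - i)) (g ^ 2)) =
          ∑ i ∈ Finset.range n, (-lam1) ^ i • (D ^ (n + 1 - i)) (g ^ 2) := by
        refine Finset.sum_congr rfl fun i hi => ?_
        rw [Nat.succ_sub (Finset.mem_range.1 hi).le, pow_succ' D, Module.End.mul_apply]
      rw [this, Nat.add_sub_cancel_left, pow_one, pow_succ]
      module
  have hp2 : 2 ≤ p := (Fact.out : p.Prime).two_le
  refine ⟨fun n hn => ?_, ?_⟩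
  · obtain ⟨k, rfl⟩ : ∃ k, n = k + 1 := ⟨n - 1, by omega⟩
    exact key k
  · obtain ⟨k, hk⟩ : ∃ k, p = k + 1 := ⟨p - 1, by omega⟩
    have hs : ∑ i ∈ Finset.range k, (-lam1) ^ i • (D ^ (k - i)) (g ^ 2) = 0 := by
      rcases h1 with h | h
      · refine Finset.sum_eq_zero fun i hi => ?_
        obtain ⟨j, hj⟩ : ∃ j, k - i = j + 1 := ⟨k - i - 1, by have := Finset.mem_range.1 hi; omega⟩
        rw [hj, pow_succ, Module.End.mul_apply, hg2 h, map_zero, smul_zero]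
      · have e2 : g ^ 2 = D g + g := by rw [hxg, h, one_smul, sub_add_cancel]
        have tel : ∀ j ≤ k, ∑ i ∈ Finset.range j, (-lam1) ^ i • (D ^ (k - i)) (g ^ 2) =
            (D ^ (k + 1)) g - (-lam1) ^ j • (D ^ (k + 1 - j)) g := by
          intro j hj
          induction j with
          | zero => simp
          | succ j ih =>
            rw [Finset.sum_range_succ, ih (by omega), e2, map_add, ← Module.End.mul_apply,
              ← pow_succ, Nat.succ_sub (show j ≤ k by omega), Nat.add_sub_add_right, pow_succ (-lam1), h]
            module
        have hc : (-lam1) ^ k = 1 := by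
          have : (-1 : K) ^ p = -1 := by
            rcases (Fact.out : p.Prime).eq_two_or_odd' with h2 | h2
            · subst h2
              rw [neg_one_sq, CharTwo.neg_eq]
            · exact h2.neg_one_pow
          rw [hk, pow_succ, mul_neg_one, neg_inj] at this
          rw [h, this]
        rw [tel k le_rfl, hc, one_smul, Nat.add_sub_cancel_left, pow_one, ← hk, hpg h, sub_self]
    rw [hk, key k, hs, smul_zero, sub_zero, Nat.add_sub_cancel]
end

section
/- Let K be a field of prime characteristic p, and let A be an associative unital K-algebra with elements g, x, y, scalars λ₁, λ₃ ∈ K and a natural number μ, satisfying: g^m = 1 for some positive integer m, gx − xg = λ₁(g − g²), gy = yg, and xy − yx + λ₁μ·y = λ₃(1 − g^{μ+1}) (with μ interpreted in K). Then (x)(ad_R y)^n = 0 for every integer n ≥ 2. (Lemma 2.9(1) of the paper.) -/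
/-- Lemma 2.9(1): with `g ^ m = 1`, `g * x - x * g = λ₁ • (g - g²)`, `g * y = y * g`
and `x * y - y * x + (λ₁·μ) • y = λ₃ • (1 - g^(μ+1))`, one has `(x)(ad_R y)^n = 0`
for every `n ≥ 2`. -/
theorem lemma_2_9_1 {K A : Type*} (p : ℕ) [Fact p.Prime] [Field K] [CharP K p]
    [Ring A] [Algebra K A] (g x y : A) (lam1 lam3 : K) (μ : ℕ)
    (m : ℕ) (hm : 0 < m) (hgm : g ^ m = 1)
    (hgx : g * x - x * g = lam1 • (g - g ^ 2))
    (hgy : g * y = y * g)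
    (hxy : x * y - y * x + (lam1 * (μ : K)) • y = lam3 • ((1 : A) - g ^ (μ + 1))) :
    ∀ n : ℕ, 2 ≤ n → (fun b => b * y - y * b)^[n] x = 0 := by
  have hc : Commute (x * y - y * x) y := by
    rw [eq_sub_of_add_eq hxy]
    have h1 : Commute (g ^ (μ + 1)) y := Commute.pow_left hgy _
    exact (((Commute.one_left y).sub_left h1).smul_left lam3).sub_left
      ((Commute.refl y).smul_left _)
  intro n hn
  obtain ⟨k, rfl⟩ := Nat.exists_eq_add_of_le' hn
  rw [Function.iterate_add_apply]
  have h2 : (fun b => b * y - y * b)^[2] x = 0 := sub_eq_zero.mpr hc.eq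
  rw [h2]
  exact Function.iterate_fixed (by simp) k
end

section
/- Let H be a bialgebra over a field K, let g, h, k ∈ H be grouplike elements, and let x, y ∈ H. Assume that the elements g, h, k, x pairwise commute, that gy = yg, and that Δ(y) = y ⊗ 1 + k ⊗ y + ω, where ω lies in A ⊗ A for A the (commutative) unital subalgebra of H generated by g, h, k, x. Then the following identity holds in the algebra H ⊗_K H: [d^1_{g,h}(x), Δ(y)] = d^1_{g,hk}([x,y]) + [h,y] ⊗ x. (Lemma 2.4 of the paper.) -/
open scoped TensorProduct

/-- Lemma 2.4: if `g, h, k` are grouplike, `g, h, k, x` pairwise commute, `g * y = y * g`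
and `Δ(y) = y ⊗ 1 + k ⊗ y + ω` with `ω` in the image of `A ⊗ A` for `A` the subalgebra
generated by `g, h, k, x`, then `[d¹_{g,h}(x), Δ(y)] = d¹_{g,hk}([x,y]) + [h,y] ⊗ x`. -/
theorem lemma_2_4 {K H : Type*} [Field K] [Ring H] [Bialgebra K H]
    (g h k x y : H)
    (hgc : Coalgebra.comul (R := K) g = g ⊗ₜ[K] g)
    (hge : Coalgebra.counit (R := K) g = 1)
    (hhc : Coalgebra.comul (R := K) h = h ⊗ₜ[K] h)
    (hhe : Coalgebra.counit (R := K) h = 1)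
    (hkc : Coalgebra.comul (R := K) k = k ⊗ₜ[K] k)
    (hke : Coalgebra.counit (R := K) k = 1)
    (cgh : g * h = h * g) (cgk : g * k = k * g) (cgx : g * x = x * g)
    (chk : h * k = k * h) (chx : h * x = x * h) (ckx : k * x = x * k)
    (cgy : g * y = y * g)
    (ω : H ⊗[K] H)
    (hω : ω ∈ Submodule.span K {z : H ⊗[K] H |
      ∃ a ∈ Algebra.adjoin K ({g, h, k, x} : Set H),
        ∃ b ∈ Algebra.adjoin K ({g, h, k, x} : Set H), z = a ⊗ₜ[K] b})
    (hy : Coalgebra.comul (R := K) y = y ⊗ₜ[K] (1 : H) + k ⊗ₜ[K] y + ω) :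
    (h ⊗ₜ[K] x - Coalgebra.comul (R := K) x + x ⊗ₜ[K] g) * Coalgebra.comul (R := K) y -
        Coalgebra.comul (R := K) y * (h ⊗ₜ[K] x - Coalgebra.comul (R := K) x + x ⊗ₜ[K] g) =
      ((h * k) ⊗ₜ[K] (x * y - y * x) - Coalgebra.comul (R := K) (x * y - y * x) +
          (x * y - y * x) ⊗ₜ[K] g) +
        (h * y - y * h) ⊗ₜ[K] x := by
  have key : ∀ c : H, c * g = g * c → c * h = h * c → c * k = k * c → c * x = x * c →
      ∀ a ∈ Algebra.adjoin K ({g, h, k, x} : Set H), c * a = a * c := by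
    intro c h1 h2 h3 h4 a ha
    induction ha using Algebra.adjoin_induction with
    | mem z hz =>
      simp only [Set.mem_insert_iff, Set.mem_singleton_iff] at hz
      rcases hz with rfl | rfl | rfl | rfl <;> assumption
    | algebraMap r => exact (Algebra.commutes r c).symm
    | add a b _ _ ha hb => rw [mul_add, add_mul, ha, hb]
    | mul a b _ _ ha hb => rw [← mul_assoc, ha, mul_assoc, hb, mul_assoc]
  have kg := key g rfl cgh cgk cgx
  have kh := key h cgh.symm rfl chk chx
  have kx := key x cgx.symm chx.symm ckx.symm rfl
  have w : ∀ c d : H, (∀ a ∈ Algebra.adjoin K ({g, h, k, x} : Set H), c * a = a * c) →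
      (∀ a ∈ Algebra.adjoin K ({g, h, k, x} : Set H), d * a = a * d) →
      (c ⊗ₜ[K] d) * ω = ω * (c ⊗ₜ[K] d) := by
    intro c d hc hd
    clear hy
    induction hω using Submodule.span_induction with
    | mem z hz =>
      obtain ⟨a, ha, b, hb, rfl⟩ := hz
      simp only [Algebra.TensorProduct.tmul_mul_tmul, hc a ha, hd b hb]
    | zero => simp
    | add a b _ _ ha hb => rw [mul_add, add_mul, ha, hb]
    | smul r a _ ha => rw [mul_smul_comm, smul_mul_assoc, ha]
  have w1 := w h x kh kx
  have w2 := w x g kx kg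
  have e1 : Coalgebra.comul (R := K) (x * y - y * x) =
      Coalgebra.comul (R := K) x * Coalgebra.comul (R := K) y -
      Coalgebra.comul (R := K) y * Coalgebra.comul (R := K) x := by
    rw [map_sub, Bialgebra.comul_mul, Bialgebra.comul_mul]
  have e2 : (h ⊗ₜ[K] x + x ⊗ₜ[K] g) * Coalgebra.comul (R := K) y -
      Coalgebra.comul (R := K) y * (h ⊗ₜ[K] x + x ⊗ₜ[K] g) =
      (h * k) ⊗ₜ[K] (x * y - y * x) + (x * y - y * x) ⊗ₜ[K] g +
        (h * y - y * h) ⊗ₜ[K] x := by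
    rw [hy]
    simp only [mul_add, add_mul, w1, w2, Algebra.TensorProduct.tmul_mul_tmul,
      TensorProduct.tmul_sub, TensorProduct.sub_tmul, mul_one, one_mul, cgy, ckx, chk]
    abel
  rw [e1]
  have e3 : ∀ X D : H ⊗[K] H, ∀ G Y : H ⊗[K] H,
      (X - D + G) * Y - Y * (X - D + G) = ((X + G) * Y - Y * (X + G)) - (D * Y - Y * D) := by
    intros; noncomm_ring
  rw [e3, e2]
  abel
end

section
/- Let K be a field of prime characteristic p, and let A be an associative unital K-algebra containing elements g, x and a scalar γ ∈ K such that g^q = 1 for some positive integer q, gx − xg = g − g², and x^p − x = γ(1 − g^p). Then for every a ∈ K: (a(1 − g) + x)^p − (a(1 − g) + x) = (a^p − a + γ)(1 − g^p). (Computational core of the isomorphism criterion for the Hopf algebras A(λ₁) in Theorem 2.11 of the paper: A(λ₁) ≅ A(γ₁) if and only if some a ∈ K satisfies a^p − a + γ₁ − λ₁ = 0.) -/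
lemma aux_expand {K A : Type*} [Field K] [Ring A] [Algebra K A] (u x : A) (n : ℕ) :
    ∃ c : ℕ → A, ∀ a : K, (a • u + x) ^ n =
      (∑ i ∈ Finset.range n, a ^ i • c i) + a ^ n • u ^ n := by
  induction n with
  | zero => exact ⟨fun _ => 0, fun a => by simp⟩
  | succ n ih =>
    obtain ⟨c, hc⟩ := ih
    refine ⟨fun i => (if i = 0 then 0 else c (i - 1) * u) +
      (if i < n then c i * x else u ^ n * x), fun a => ?_⟩
    simp only [smul_add, Finset.sum_add_distrib]
    rw [pow_succ, hc, Finset.sum_range_succ', Finset.sum_range_succ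
      (fun i => a ^ i • (if i < n then c i * x else u ^ n * x))]
    have h1 : ∑ i ∈ Finset.range n, a ^ i • (if i < n then c i * x else u ^ n * x) =
        (∑ i ∈ Finset.range n, a ^ i • c i) * x := by
      rw [Finset.sum_mul]
      refine Finset.sum_congr rfl fun i hi => ?_
      rw [if_pos (Finset.mem_range.1 hi), smul_mul_assoc]
    have h2 : ∑ i ∈ Finset.range n, a ^ (i + 1) •
        (if i + 1 = 0 then 0 else c (i + 1 - 1) * u) =
        (∑ i ∈ Finset.range n, a ^ i • c i) * (a • u) := by
      rw [Finset.sum_mul]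
      refine Finset.sum_congr rfl fun i hi => ?_
      simp [pow_succ, mul_smul]
      rw [smul_comm]
    rw [h1, h2]
    have h3 : (a ^ n • u ^ n) * (a • u) = a ^ (n + 1) • u ^ (n + 1) := by
      simp [pow_succ, mul_smul]
      rw [smul_comm]
    rw [add_mul, mul_add, mul_add, h3]
    simp only [lt_irrefl, if_true, if_false, smul_zero, add_zero, smul_mul_assoc]
    abel

lemma aux_nat {K A : Type*} (p : ℕ) [Field K]
    [Ring A] [Algebra K A] (g x : A) (γ : K) (q : ℕ) (hq : 0 < q) (hgq : g ^ q = 1)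
    (hgx : g * x - x * g = g - g ^ 2)
    (hxp : x ^ p - x = γ • ((1 : A) - g ^ p)) (n : ℕ) :
    ((n : K) • ((1 : A) - g) + x) ^ p = x ^ p + (n : K) • (1 - g) := by
  have hu : IsUnit g := IsUnit.of_pow_eq_one hgq hq.ne'
  have hs : ∀ n : ℕ, g ^ n * x = ((n : K) • ((1 : A) - g) + x) * g ^ n := by
    intro n
    induction n with
    | zero => simp
    | succ n ih =>
      have e : g * x = x * g + (g - g ^ 2) := by rw [← hgx]; abel
      have e2 : g * (1 - g) = (1 - g) * g := by noncomm_ring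
      rw [pow_succ', mul_assoc, ih, ← mul_assoc, mul_add, e, mul_smul_comm, e2,
        ← mul_assoc]
      congr 1
      push_cast
      rw [add_smul, one_smul, add_mul, add_mul, smul_mul_assoc]
      noncomm_ring
  have h : SemiconjBy (g ^ n) x ((n : K) • ((1 : A) - g) + x) := hs n
  have h2 := (h.pow_right p).eq
  have hx : x ^ p = x + γ • ((1 : A) - g ^ p) := by rw [← hxp]; abel
  have hcom : g ^ n * (1 - g ^ p) = (1 - g ^ p) * g ^ n := by
    rw [mul_sub, sub_mul, ← pow_add, ← pow_add, add_comm n p]; simp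
  apply (hu.pow n).mul_right_cancel
  rw [← h2, hx, mul_add, hs n, mul_smul_comm, hcom, ← smul_mul_assoc, ← add_mul]
  congr 1
  abel

/-- Computational core of the isomorphism criterion for the Hopf algebras `A(λ₁)` in
Theorem 2.11: if `g ^ q = 1` (`q > 0`), `g * x - x * g = g - g²` and
`x ^ p - x = γ • (1 - g ^ p)`, then for every `a ∈ K`,
`(a(1 - g) + x)^p - (a(1 - g) + x) = (a^p - a + γ)(1 - g^p)`. -/
theorem thm_2_11_A {K A : Type*} (p : ℕ) [Fact p.Prime] [Field K] [CharP K p]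
    [Ring A] [Algebra K A] (g x : A) (γ : K) (q : ℕ) (hq : 0 < q) (hgq : g ^ q = 1)
    (hgx : g * x - x * g = g - g ^ 2)
    (hxp : x ^ p - x = γ • ((1 : A) - g ^ p)) (a : K) :
    (a • ((1 : A) - g) + x) ^ p - (a • ((1 : A) - g) + x) =
      (a ^ p - a + γ) • ((1 : A) - g ^ p) := by
  rcases subsingleton_or_nontrivial A with hA | hA
  · exact Subsingleton.elim _ _
  have hp : p.Prime := Fact.out
  have : CharP A p := charP_of_injective_algebraMap (algebraMap K A).injective p
  have hup : (1 - g) ^ p = 1 - g ^ p := by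
    rw [sub_pow_char_of_commute _ (Commute.one_left g), one_pow]
  obtain ⟨c, hc⟩ := aux_expand (K := K) (1 - g) x p
  have key : (∑ i ∈ Finset.range p, a ^ i • c i) - x ^ p - a • ((1 - g) - (1 - g ^ p)) = 0 := by
    rw [← Module.forall_dual_apply_eq_zero_iff K]
    intro φ
    let Q : Polynomial K := (∑ i ∈ Finset.range p, Polynomial.C (φ (c i)) * Polynomial.X ^ i)
      - Polynomial.C (φ (x ^ p)) - Polynomial.C (φ ((1 - g) - (1 - g ^ p))) * Polynomial.X
    have hQe : ∀ b : K, Q.eval b = φ ((∑ i ∈ Finset.range p, b ^ i • c i) - x ^ p -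
        b • ((1 - g) - (1 - g ^ p))) := by
      intro b
      simp only [Q, Polynomial.eval_sub, Polynomial.eval_finsetSum, Polynomial.eval_mul,
        Polynomial.eval_C, Polynomial.eval_pow, Polynomial.eval_X, map_sub, map_sum, map_smul,
        smul_eq_mul]
      simp only [mul_comm]
    have hdeg : Q ∈ Polynomial.degreeLT K p := by
      refine Submodule.sub_mem _ (Submodule.sub_mem _ (Submodule.sum_mem _ fun i hi => ?_) ?_) ?_
      · rw [Polynomial.mem_degreeLT]
        exact (Polynomial.degree_C_mul_X_pow_le _ _).trans_lt
          (by exact_mod_cast Finset.mem_range.1 hi)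
      · rw [Polynomial.mem_degreeLT]
        exact Polynomial.degree_C_le.trans_lt (by exact_mod_cast hp.pos)
      · rw [Polynomial.mem_degreeLT]
        exact (Polynomial.degree_C_mul_X_le _).trans_lt (by exact_mod_cast hp.one_lt)
    rw [Polynomial.mem_degreeLT] at hdeg
    have hinj : Function.Injective (fun i : Fin p => ((i : ℕ) : K)) := by
      intro i j hij
      exact Fin.ext (CharP.natCast_injOn_Iio K p i.2 j.2 hij)
    have hQ0 : Q = 0 := by
      by_contra hne
      refine hne (Polynomial.eq_zero_of_natDegree_lt_card_of_eval_eq_zero Q hinj ?_ ?_)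
      · intro i
        rw [hQe]
        have h1 := aux_nat (K := K) p g x γ q hq hgq hgx hxp (i : ℕ)
        rw [hc, hup] at h1
        have h2 : ((i : ℕ) : K) ^ p = (i : ℕ) := by
          have := map_natCast (frobenius K p) (i : ℕ)
          rwa [frobenius_def] at this
        rw [h2] at h1
        rw [eq_sub_of_add_eq h1, smul_sub _ (1 - g) (1 - g ^ p), ← map_zero φ]
        congr 1
        generalize ((i : ℕ) : K) • (1 - g) = y
        generalize ((i : ℕ) : K) • (1 - g ^ p) = z
        abel
      · rw [Fintype.card_fin]
        exact (Polynomial.natDegree_lt_iff_degree_lt hne).2 hdeg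
    rw [← hQe, hQ0, Polynomial.eval_zero]
  have e1 : ∑ i ∈ Finset.range p, a ^ i • c i = x ^ p + a • ((1 - g) - (1 - g ^ p)) := by
    rw [sub_sub, sub_eq_zero] at key
    exact key
  have hx : x ^ p = x + γ • ((1 : A) - g ^ p) := by rw [← hxp]; abel
  rw [hc, hup, e1, hx, add_smul, sub_smul, smul_sub a (1 - g) (1 - g ^ p)]
  abel
end

section
/- Let K be a field, and let A be an associative unital K-algebra containing elements g, x and a scalar λ ∈ K such that gx − xg = λ(g − g^{q+1}) for some natural number q. Then for every natural number n: g·x^n = (x + λ(1 − g^q))^n · g. (Claim proved in Case (A5) of the paper.) -/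
/-- Claim proved in Case (A5): if `g * x - x * g = λ • (g - g^(q+1))`, then
`g * x^n = (x + λ • (1 - g^q))^n * g` for every natural number `n`. -/
theorem case_A5_claim {K A : Type*} [Field K] [Ring A] [Algebra K A]
    (g x : A) (lam : K) (q : ℕ)
    (h : g * x - x * g = lam • (g - g ^ (q + 1))) (n : ℕ) :
    g * x ^ n = (x + lam • ((1 : A) - g ^ q)) ^ n * g := by
  have h1 : SemiconjBy g x (x + lam • ((1 : A) - g ^ q)) := by
    unfold SemiconjBy
    rw [add_mul, smul_mul_assoc, sub_mul, one_mul, ← pow_succ, ← h]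
    abel
  exact (h1.pow_right n).eq
end

section
/- Let K be a field, and let A be an associative unital K-algebra containing elements g, x and scalars ξ, λ ∈ K such that gx − ξxg = λ(g − g^{q+1}) for some natural number q. Then for every positive integer i: g^i x = ξ^i · x g^i + (Σ_{j=0}^{i−1} ξ^j) · λ · (g^i − g^{q+i}). In particular, if ξ^q = 1 and Σ_{j=0}^{q−1} ξ^j = 0 (e.g. ξ a primitive q-th root of unity), then g^q x = x g^q. (Claim proved in Case (A6) of the paper.) -/
/-- Claim proved in Case (A6): if `g * x - ξ • (x * g) = λ • (g - g^(q+1))`, then for every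
`i ≥ 1`, `g^i * x = ξ^i • (x * g^i) + (∑_{j=0}^{i-1} ξ^j) · λ • (g^i - g^(q+i))`;
in particular, if `ξ^q = 1` and `∑_{j=0}^{q-1} ξ^j = 0`, then `g^q * x = x * g^q`. -/
theorem case_A6_claim {K A : Type*} [Field K] [Ring A] [Algebra K A]
    (g x : A) (ξ lam : K) (q : ℕ)
    (h : g * x - ξ • (x * g) = lam • (g - g ^ (q + 1))) :
    (∀ i : ℕ, 0 < i → g ^ i * x =
      ξ ^ i • (x * g ^ i) +
        ((∑ j ∈ Finset.range i, ξ ^ j) * lam) • (g ^ i - g ^ (q + i))) ∧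
    (ξ ^ q = 1 → ∑ j ∈ Finset.range q, ξ ^ j = 0 → g ^ q * x = x * g ^ q) := by
  have hgx : g * x = ξ • (x * g) + lam • (g - g ^ (q + 1)) := by
    rw [← h]; abel
  have key : ∀ i : ℕ, g ^ i * x =
      ξ ^ i • (x * g ^ i) +
        ((∑ j ∈ Finset.range i, ξ ^ j) * lam) • (g ^ i - g ^ (q + i)) := by
    intro i
    induction i with
    | zero => simp
    | succ i ih =>
      have e1 : g * g ^ i = g ^ (i + 1) := (pow_succ' g i).symm
      have e2 : g * g ^ (q + i) = g ^ (q + (i + 1)) := (pow_succ' g (q + i)).symm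
      have e3 : g ^ (q + 1) * g ^ i = g ^ (q + (i + 1)) := by
        rw [← pow_add]; congr 1; omega
      have e4 : g * (x * g ^ i) =
          ξ • (x * g ^ (i + 1)) + lam • (g ^ (i + 1) - g ^ (q + (i + 1))) := by
        rw [← mul_assoc, hgx, add_mul, smul_mul_assoc, smul_mul_assoc, sub_mul, e3, mul_assoc, e1]
      rw [← e1, mul_assoc, ih, mul_add, mul_smul_comm, mul_smul_comm, mul_sub, e2, e4, e1,
        Finset.sum_range_succ]
      module
  refine ⟨fun i _ => key i, fun h1 h2 => ?_⟩
  rw [key q, h1, h2]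
  simp
end

section
/- Let K be a field of prime characteristic p, and let A be an associative unital K-algebra containing elements g, x and a scalar λ ∈ K such that gx − xg = λ(g − g^{p+1}). Then for every positive integer n: (g)(ad_R x)^n = λ^n · g·(1 − g^p)^n. In particular, (g)(ad_R x)^p = λ^p · g·(1 − g^{p²}). (Claim proved in Case (A4a)–(A4b) of the paper.) -/
/-- Claim proved in Cases (A4a)–(A4b): in characteristic `p`, if
`g * x - x * g = λ • (g - g^(p+1))`, then `(g)(ad_R x)^n = λ^n • (g * (1 - g^p)^n)` for
every `n ≥ 1`; in particular `(g)(ad_R x)^p = λ^p • (g * (1 - g^(p²)))`. -/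
theorem case_A4_claim {K A : Type*} (p : ℕ) [Fact p.Prime] [Field K] [CharP K p]
    [Ring A] [Algebra K A] (g x : A) (lam : K)
    (h : g * x - x * g = lam • (g - g ^ (p + 1))) :
    (∀ n : ℕ, 0 < n →
      (fun b => b * x - x * b)^[n] g = lam ^ n • (g * ((1 : A) - g ^ p) ^ n)) ∧
    (fun b => b * x - x * b)^[p] g = lam ^ p • (g * ((1 : A) - g ^ (p ^ 2))) := by
  have hk : ∀ k : ℕ, g ^ k * x - x * g ^ k = (k : K) • (lam • (g ^ k - g ^ (k + p))) := by
    intro k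
    induction k with
    | zero => simp
    | succ k ih =>
      have e : g ^ (k + 1) * x - x * g ^ (k + 1)
          = g ^ k * (g * x - x * g) + (g ^ k * x - x * g ^ k) * g := by
        rw [pow_succ]; noncomm_ring
      have e1 : g ^ k * (g - g ^ (p + 1)) = g ^ (k + 1) - g ^ (k + 1 + p) := by
        rw [mul_sub, ← pow_succ, ← pow_add]; congr 2; ring
      have e2 : (g ^ k - g ^ (k + p)) * g = g ^ (k + 1) - g ^ (k + 1 + p) := by
        rw [sub_mul, ← pow_succ, ← pow_succ]; congr 2; ring
      rw [e, h, ih, mul_smul_comm, smul_mul_assoc, smul_mul_assoc, e1, e2]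
      push_cast
      rw [add_smul, one_smul, add_comm]
  have hp : Commute (g ^ p) x := by
    have := hk p
    rw [CharP.cast_eq_zero K p, zero_smul, sub_eq_zero] at this
    exact this
  have hc : Commute (1 - g ^ p) x := (Commute.one_left x).sub_left hp
  have main : ∀ n : ℕ,
      (fun b => b * x - x * b)^[n] g = lam ^ n • (g * ((1 : A) - g ^ p) ^ n) := by
    intro n
    induction n with
    | zero => simp
    | succ n ih =>
      rw [Function.iterate_succ_apply', ih]
      have hn : (1 - g ^ p) ^ n * x = x * (1 - g ^ p) ^ n := (hc.pow_left n).eq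
      have e1 : g - g ^ (p + 1) = g * (1 - g ^ p) := by
        rw [mul_sub, mul_one, ← pow_succ']
      have e : g * (1 - g ^ p) ^ n * x - x * (g * (1 - g ^ p) ^ n)
          = (g * x - x * g) * (1 - g ^ p) ^ n := by
        rw [mul_assoc, hn, sub_mul, mul_assoc, mul_assoc]
      show lam ^ n • (g * (1 - g ^ p) ^ n) * x - x * lam ^ n • (g * (1 - g ^ p) ^ n) = _
      rw [smul_mul_assoc, mul_smul_comm, ← smul_sub, e, h, e1, smul_mul_assoc, smul_smul,
        ← pow_succ, mul_assoc, ← pow_succ']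
  refine ⟨fun n _ => main n, ?_⟩
  rw [main p]
  have f : ((1 : Polynomial K) - Polynomial.X ^ p) ^ p = 1 - Polynomial.X ^ (p ^ 2) := by
    rw [sub_pow_char, one_pow, ← pow_mul, sq]
  have f2 := congrArg (Polynomial.aeval g) f
  simp only [map_pow, map_sub, map_one, Polynomial.aeval_X] at f2
  rw [f2]
end

section
/- Let K be a field of prime characteristic p, and let A be an associative unital K-algebra containing elements x, y such that the commutator c := xy − yx commutes with both x and y. Then applying the map z ↦ [z, y] exactly p − 2 times to the element c·x^{p−1} yields (p−1)!·c^{p−1}·x; that is, (c·x^{p−1})(ad_R y)^{p−2} = (p−1)!·c^{p−1}·x. (Claim proved in Case (D3b2) of the paper, where ([x,y]x^{p−1})(ad_R y)^{p−2} = (p−1)!·[x,y]^{p−1}·x.) -/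
theorem ad_pow_aux {A : Type*} [Ring A] (x y c : A) (hc : x * y - y * x = c)
    (hx : Commute c x) (n : ℕ) :
    x ^ n * y - y * x ^ n = n • (c * x ^ (n - 1)) := by
  induction n with
  | zero => simp
  | succ n ih =>
    have h1 : x ^ (n + 1) * y - y * x ^ (n + 1)
        = x ^ n * (x * y - y * x) + (x ^ n * y - y * x ^ n) * x := by
      rw [pow_succ]; noncomm_ring
    rw [h1, hc, ih, ← (hx.pow_right n).eq, smul_mul_assoc, mul_assoc]
    cases n with
    | zero => simp
    | succ m => rw [Nat.add_sub_cancel, ← pow_succ, Nat.add_sub_cancel, succ_nsmul' _ (m + 1)]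

theorem ad_iter_aux {A : Type*} [Ring A] (x y c : A) (hc : x * y - y * x = c)
    (hx : Commute c x) (hy : Commute c y) (k : ℕ) : ∀ m j : ℕ,
    (fun b => b * y - y * b)^[k] (m • (c ^ j * x ^ (k + 1))) =
      (m * (k + 1).factorial) • (c ^ (j + k) * x) := by
  induction k with
  | zero => intro m j; simp
  | succ k ih =>
    intro m j
    rw [Function.iterate_succ_apply]
    have h : m • (c ^ j * x ^ (k + 1 + 1)) * y - y * (m • (c ^ j * x ^ (k + 1 + 1)))
        = (m * (k + 2)) • (c ^ (j + 1) * x ^ (k + 1)) := by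
      rw [smul_mul_assoc, mul_smul_comm, ← smul_sub, mul_assoc, ← mul_assoc y,
        ← (hy.pow_left j).eq, mul_assoc, ← mul_sub, ad_pow_aux x y c hc hx, mul_smul_comm,
        ← mul_assoc, ← pow_succ, smul_smul, Nat.add_sub_cancel]
    simp only [h]
    rw [ih, Nat.factorial_succ (k + 1), mul_assoc, show j + 1 + k = j + (k + 1) by ring]

/-- Claim proved in Case (D3b2): in characteristic `p`, if `c := x * y - y * x` commutes
with both `x` and `y`, then `(c·x^(p-1))(ad_R y)^(p-2) = (p-1)! • (c^(p-1) * x)`. -/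
theorem case_D3b2_claim {K A : Type*} (p : ℕ) [Fact p.Prime] [Field K] [CharP K p]
    [Ring A] [Algebra K A] (x y : A)
    (hcx : (x * y - y * x) * x = x * (x * y - y * x))
    (hcy : (x * y - y * x) * y = y * (x * y - y * x)) :
    (fun b => b * y - y * b)^[p - 2] ((x * y - y * x) * x ^ (p - 1)) =
      (((p - 1).factorial : K)) • ((x * y - y * x) ^ (p - 1) * x) := by
  obtain ⟨k, rfl⟩ : ∃ k, p = k + 2 :=
    ⟨p - 2, by have := (Fact.out : p.Prime).two_le; omega⟩
  have h := ad_iter_aux x y _ rfl hcx hcy k 1 1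
  rw [one_smul, pow_one, one_mul] at h
  rw [show k + 2 - 2 = k by omega, show k + 2 - 1 = k + 1 by omega, h, Nat.cast_smul_eq_nsmul,
    add_comm 1 k]
end

section
/- Let K be a field of prime characteristic p and H a bialgebra over K. Let g ∈ H be a grouplike element with g^m = 1 for some positive integer m, let μ be a natural number and λ ∈ K, and let y ∈ H satisfy Δ(y) = y ⊗ 1 + g^μ ⊗ y and gy − yg = λ(g − g^{μ+1}). Then Δ(y^p − (λμ)^{p−1}·y) = (y^p − (λμ)^{p−1}·y) ⊗ 1 + g^{pμ} ⊗ (y^p − (λμ)^{p−1}·y), where μ is interpreted in K; that is, y^p − (λμ)^{p−1}·y is (1, g^{pμ})-skew-primitive. (Claim proved in Case (C4) of the paper.) -/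
open scoped TensorProduct

open Polynomial in
/-- falling factorial with step `c` -/
noncomputable def fallP {K : Type*} [Field K] (c : K) (n : ℕ) : K[X] :=
  ∏ i ∈ Finset.range n, (X - C ((i : K) * c))

open Polynomial in
noncomputable def coefQ {K : Type*} [Field K] (c : K) (n j : ℕ) : K[X] :=
  (n.choose j : K[X]) * ∏ i ∈ Finset.Ico j n, (X - C ((i : K) * c))

open Polynomial in
lemma coefQ_zero_right {K : Type*} [Field K] (c : K) (n : ℕ) :
    coefQ c n 0 = fallP c n := by
  rw [coefQ, fallP, Finset.range_eq_Ico, Nat.choose_zero_right, Nat.cast_one, one_mul]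

open Polynomial in
lemma fallP_succ {K : Type*} [Field K] (c : K) (n : ℕ) :
    fallP c (n + 1) = (X - C ((n : K) * c)) * fallP c n := by
  rw [fallP, Finset.prod_range_succ, mul_comm, fallP]

open Polynomial in
lemma coefQ_succ {K : Type*} [Field K] (c : K) (n j : ℕ) :
    coefQ c (n + 1) (j + 1) =
      (X - C (((n + (j + 1) : ℕ) : K) * c)) * coefQ c n (j + 1) + coefQ c n j := by
  rcases lt_trichotomy j n with h | h | h
  · have h1 : (n.choose (j + 1) : K[X]) * (j + 1) = n.choose j * (n - j) := by
      have := Nat.choose_succ_right_eq n j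
      have h2 := congrArg (Nat.cast : ℕ → K[X]) this
      rw [Nat.cast_mul, Nat.cast_mul, Nat.cast_sub h.le] at h2
      simpa using h2
    unfold coefQ
    rw [Finset.prod_Ico_succ_top (by omega), Finset.prod_eq_prod_Ico_succ_bot h, Nat.choose_succ_succ]
    simp only [Nat.cast_add, Nat.cast_one, C_mul, C_add, C_1, map_natCast]
    generalize (∏ k ∈ Finset.Ico (j + 1) n, (X - (k : K[X]) * C c)) = P
    linear_combination (C c * P) * h1
  · subst h
    simp [coefQ]
  · simp [coefQ, Nat.choose_eq_zero_of_lt h, Nat.choose_eq_zero_of_lt (show n < j + 1 by omega),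
      Nat.choose_eq_zero_of_lt (show n + 1 < j + 1 by omega)]

lemma comm_pow_aux {K S : Type*} [Field K] [Ring S] [Algebra K S] (c : K) (h y : S)
    (hyh : y * h = h * y - c • (h - h * h)) (j : ℕ) :
    y * h ^ j = h ^ j * y - ((j : K) * c) • (h ^ j - h ^ (j + 1)) := by
  induction j with
  | zero => simp
  | succ j ih =>
    rw [pow_succ, ← mul_assoc, ih, sub_mul, mul_assoc (h ^ j), hyh]
    simp only [pow_succ, mul_sub, sub_mul, smul_sub, mul_smul_comm, smul_mul_assoc, mul_assoc,
      Nat.cast_add, Nat.cast_one, add_mul, add_smul, one_mul]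
    abel

open Polynomial in
lemma main_expand {K S : Type*} [Field K] [Ring S] [Algebra K S] (c : K) (h y z : S)
    (hyh : y * h = h * y - c • (h - h * h)) (hzh : Commute z h) (hzy : Commute z y) (n : ℕ) :
    aeval (y + h * z) (fallP c n) =
      ∑ j ∈ Finset.range (n + 1), h ^ j * aeval y (coefQ c n j) * aeval z (fallP (-c) j) := by
  induction n with
  | zero => simp [fallP, coefQ]
  | succ n ih =>
    have key : ∀ j, (y + h * z - algebraMap K S ((n : K) * c)) *
        (h ^ j * aeval y (coefQ c n j) * aeval z (fallP (-c) j)) =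
        h ^ j * aeval y ((X - C (((n + j : ℕ) : K) * c)) * coefQ c n j) * aeval z (fallP (-c) j)
        + h ^ (j + 1) * aeval y (coefQ c n j) * aeval z (fallP (-c) (j + 1)) := by
      intro j
      have hz : z * (h ^ j * aeval y (coefQ c n j)) = (h ^ j * aeval y (coefQ c n j)) * z := by
        refine Commute.mul_right (hzh.pow_right j) ?_
        induction coefQ c n j using Polynomial.induction_on' with
        | add p q hp hq => rw [map_add]; exact hp.add_right hq
        | monomial k a =>
          rw [aeval_monomial]
          exact (Algebra.commute_algebraMap_right a z).mul_right (hzy.pow_right k)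
      rw [fallP_succ]
      simp only [map_mul, map_sub, aeval_X, aeval_C]
      generalize aeval y (coefQ c n j) = A at *
      generalize aeval z (fallP (-c) j) = Z at *
      have e1 : h * z * (h ^ j * A * Z) = h ^ (j + 1) * A * (z * Z) := by
        rw [mul_assoc h z, ← mul_assoc z, hz, pow_succ']
        simp only [mul_assoc]
      have e2 : y * (h ^ j * A * Z) = h ^ j * (y * A) * Z
          - ((j : K) * c) • (h ^ j * A * Z - h ^ (j + 1) * A * Z) := by
        rw [← mul_assoc, ← mul_assoc, comm_pow_aux c h y hyh j]
        simp only [sub_mul, smul_mul_assoc, mul_assoc]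
      rw [sub_mul, add_mul, e1, e2]
      simp only [Algebra.algebraMap_eq_smul_one, sub_mul, mul_sub, smul_mul_assoc, mul_smul_comm,
        one_mul, Nat.cast_add, add_mul, add_smul, smul_sub, mul_neg, neg_smul, sub_neg_eq_add,
        mul_add]
      module
    rw [fallP_succ, map_mul, map_sub, aeval_X, aeval_C, ih, Finset.mul_sum,
      Finset.sum_congr rfl (fun j _ => key j), Finset.sum_add_distrib, Finset.sum_range_succ' _ (n + 1)]
    simp only [coefQ_succ, map_add, mul_add, add_mul, Finset.sum_add_distrib]
    have h0 : coefQ c (n + 1) 0 = (X - C (((n + 0 : ℕ) : K) * c)) * coefQ c n 0 := by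
      rw [coefQ_zero_right, coefQ_zero_right, fallP_succ, add_zero]
    rw [h0, add_right_comm, ← Finset.sum_range_succ' (fun j => h ^ j *
      aeval y ((X - C (((n + j : ℕ) : K) * c)) * coefQ c n j) * aeval z (fallP (-c) j)),
      Finset.sum_range_succ _ (n + 1)]
    simp [coefQ]

open Polynomial in
lemma fallP_prime {K : Type*} (p : ℕ) [Fact p.Prime] [Field K] [CharP K p] (c : K) :
    fallP c p = X ^ p - C (c ^ (p - 1)) * X := by
  have hp := (Fact.out : p.Prime)
  by_cases hc : c = 0
  · subst hc
    have : p - 1 ≠ 0 := by have := hp.two_le; omega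
    simp [fallP, this]
  have hlt : (C (c ^ (p - 1)) * X : K[X]).degree < (X ^ p : K[X]).degree := by
    rw [degree_X_pow]
    refine lt_of_le_of_lt (degree_C_mul_X_le _) ?_
    exact_mod_cast hp.one_lt
  have hd : (X ^ p - C (c ^ (p - 1)) * X : K[X]).degree = p := by
    rw [degree_sub_eq_left_of_degree_lt hlt, degree_X_pow]
  have hm : (X ^ p - C (c ^ (p - 1)) * X : K[X]).Monic := (monic_X_pow p).sub_of_left hlt
  have hf : (fallP c p).Monic := monic_prod_of_monic _ _ (fun i _ => monic_X_sub_C _)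
  have hfd : (fallP c p).degree = p := by
    rw [fallP, degree_prod, Finset.sum_congr rfl (fun i _ => degree_X_sub_C _)]; simp
  have hinj : Set.InjOn (fun i : ℕ => (i : K) * c) (Finset.range p) := by
    intro i hi j hj hij
    have h1 : (i : K) = j := mul_right_cancel₀ hc hij
    rw [CharP.cast_eq_iff_mod_eq K p] at h1
    simp only [Finset.coe_range, Set.mem_Iio] at hi hj
    rwa [Nat.mod_eq_of_lt hi, Nat.mod_eq_of_lt hj] at h1
  refine eq_of_degree_sub_lt_of_eval_index_eq (s := Finset.range p) (v := fun i : ℕ => (i : K) * c) hinj ?_ ?_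
  · rw [Finset.card_range, ← hfd]
    exact degree_sub_lt (hfd.trans hd.symm) hf.ne_zero (by rw [hf.leadingCoeff, hm.leadingCoeff])
  · intro i hi
    have : eval ((i : K) * c) (fallP c p) = 0 := by
      rw [fallP, eval_prod]
      exact Finset.prod_eq_zero hi (by simp)
    rw [this]
    have hfr : (i : K) ^ p = i := by
      have := map_natCast (frobenius K p) i
      rwa [frobenius_def] at this
    have hcp : c ^ p = c ^ (p - 1) * c := by
      rw [← pow_succ, Nat.sub_add_cancel hp.one_le]
    simp only [eval_sub, eval_pow, eval_X, eval_mul, eval_C, mul_pow, hfr, hcp]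
    ring

open Polynomial in
lemma main_prime {K S : Type*} (p : ℕ) [Fact p.Prime] [Field K] [CharP K p]
    [Ring S] [Algebra K S] (c : K) (h y z : S)
    (hyh : y * h = h * y - c • (h - h * h)) (hzh : Commute z h) (hzy : Commute z y) :
    (y + h * z) ^ p - c ^ (p - 1) • (y + h * z) =
      (y ^ p - c ^ (p - 1) • y) + h ^ p * (z ^ p - c ^ (p - 1) • z) := by
  have hp := (Fact.out : p.Prime)
  have hneg : (-c) ^ (p - 1) = c ^ (p - 1) := by
    rw [neg_pow]
    have h1 : (-1 : K) ^ p = -1 := by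
      have := map_neg (frobenius K p) 1
      simpa [frobenius_def] using this
    have h2 : (-1 : K) ^ (p - 1) = 1 := by
      rw [← Nat.sub_add_cancel hp.one_le, pow_succ] at h1
      simpa using h1
    rw [h2, one_mul]
  have e := main_expand c h y z hyh hzh hzy p
  have hmid : ∑ j ∈ Finset.range p, h ^ j * aeval y (coefQ c p j) * aeval z (fallP (-c) j) =
      aeval y (fallP c p) := by
    rw [Finset.sum_eq_single 0]
    · simp [coefQ_zero_right, fallP]
    · intro j hj hj0
      have : ((p.choose j : ℕ) : K[X]) = 0 := by
        rw [CharP.cast_eq_zero_iff K[X] p]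
        exact hp.dvd_choose_self hj0 (Finset.mem_range.1 hj)
      simp [coefQ, this]
    · intro h0
      exact absurd (Finset.mem_range.2 hp.pos) h0
  have hQ : coefQ c p p = 1 := by simp [coefQ]
  rw [Finset.sum_range_succ, hmid, hQ, fallP_prime, fallP_prime, hneg] at e
  simpa [Algebra.smul_def] using e

/-- Claim proved in Case (C4): if `g` is grouplike with `g ^ m = 1`,
`Δ(y) = y ⊗ 1 + g^μ ⊗ y` and `g * y - y * g = λ • (g - g^(μ+1))`, then
`y^p - (λμ)^(p-1) • y` is `(1, g^(pμ))`-skew-primitive. -/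
theorem case_C4_claim {K H : Type*} (p : ℕ) [Fact p.Prime] [Field K] [CharP K p]
    [Ring H] [Bialgebra K H] (g y : H) (μ : ℕ) (lam : K)
    (m : ℕ) (hm : 0 < m) (hgm : g ^ m = 1)
    (hgc : Coalgebra.comul (R := K) g = g ⊗ₜ[K] g)
    (hge : Coalgebra.counit (R := K) g = 1)
    (hy : Coalgebra.comul (R := K) y = y ⊗ₜ[K] (1 : H) + (g ^ μ) ⊗ₜ[K] y)
    (hgy : g * y - y * g = lam • (g - g ^ (μ + 1))) :
    Coalgebra.comul (R := K) (y ^ p - (lam * (μ : K)) ^ (p - 1) • y) =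
      (y ^ p - (lam * (μ : K)) ^ (p - 1) • y) ⊗ₜ[K] (1 : H) +
        (g ^ (p * μ)) ⊗ₜ[K] (y ^ p - (lam * (μ : K)) ^ (p - 1) • y) := by
  have hgg : y * g = g * y - lam • (g - g ^ (μ + 1)) := by rw [← hgy]; abel
  have hk : ∀ k : ℕ, y * g ^ k = g ^ k * y - ((k : K) * lam) • (g ^ k - g ^ (k + μ)) := by
    intro k
    induction k with
    | zero =>  simp
    | succ k ih =>
      rw [pow_succ, ← mul_assoc, ih, sub_mul, mul_assoc (g ^ k), hgg, ← pow_succ]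
      have e1 : g ^ k * g ^ (μ + 1) = g ^ (k + 1 + μ) := by rw [← pow_add]; congr 1; ring
      have e2 : g ^ (k + μ) * g = g ^ (k + 1 + μ) := by rw [← pow_succ]; congr 1; ring
      simp only [mul_sub, sub_mul, smul_sub, mul_smul_comm, smul_mul_assoc, e1, e2, ← pow_succ, ← mul_assoc,
        Nat.cast_add, Nat.cast_one, add_mul, add_smul, one_mul]
      abel
  have hh := hk μ
  rw [pow_add, mul_comm (μ : K) lam] at hh
  have hm1 := main_prime p (S := H ⊗[K] H) (lam * (μ : K)) ((g ^ μ) ⊗ₜ[K] (1 : H))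
    (y ⊗ₜ[K] (1 : H)) ((1 : H) ⊗ₜ[K] y)
    (by simp only [Algebra.TensorProduct.tmul_mul_tmul, mul_one, hh, TensorProduct.sub_tmul,
          ← TensorProduct.smul_tmul'])
    (by simp [Commute, SemiconjBy]) (by simp [Commute, SemiconjBy])
  simp only [Algebra.TensorProduct.tmul_mul_tmul, Algebra.TensorProduct.tmul_pow, one_pow,
    mul_one, one_mul] at hm1
  rw [map_sub, map_smul, Bialgebra.comul_pow, hy, hm1]
  simp only [← pow_mul, mul_comm μ p, TensorProduct.sub_tmul, TensorProduct.tmul_sub,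
    TensorProduct.smul_tmul', TensorProduct.tmul_smul, mul_sub, mul_smul_comm,
    Algebra.TensorProduct.tmul_mul_tmul, mul_one, one_mul]
end
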